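/- For n ≤ m and any ε ≥ 0 with (1+ε)t ≤ n, the capacity of the additive-multiplicative matrix channel Y = A(X+W) is lower bounded by C ≥ (m-n)(n - t - εt) - log_q 4 - 2tnm/q^{1+εt}, achieved by choosing X uniformly among n×m matrices of rank n - (1+ε)t. -/

import Mathlib

open scoped BigOperators

/-- Mutual information (logarithm base `b`) between the input and output of a discrete
memoryless channel with finite input alphabet `α`, finite output alphabet `β`, transition
probabilities `K` and input distribution `p`. -/
noncomputable def mutualInfoB {α β : Type*} [Fintype α] [Fintype β]
    (b : ℝ) (p : α → ℝ) (K : α → β → ℝ) : ℝ :=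
  ∑ x : α, ∑ y : β, p x * K x y *
    Real.logb b (K x y / ∑ x' : α, p x' * K x' y)

/-- The capacity (in base-`b` units) of a discrete channel with transition probabilities `K`:
the supremum of the mutual information over all input distributions. -/
noncomputable def capacityB {α β : Type*} [Fintype α] [Fintype β]
    (b : ℝ) (K : α → β → ℝ) : ℝ :=
  sSup {c : ℝ | ∃ p : α → ℝ, (∀ x, 0 ≤ p x) ∧ (∑ x : α, p x) = 1 ∧ c = mutualInfoB b p K}

/-- Transition probabilities of the additive-multiplicative matrix channel `Y = A(X + W)`,
where `A` is uniform over `GL_n(F_q)` and `W` is uniform over the `n × m` matrices of rank `t`,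
independent of each other and of `X`. -/
noncomputable def ammcKernel (F : Type) [Field F] [Fintype F] (n m t : ℕ)
    (X Y : Matrix (Fin n) (Fin m) F) : ℝ :=
  (Nat.card {p : Matrix.GeneralLinearGroup (Fin n) F ×
        {W : Matrix (Fin n) (Fin m) F // W.rank = t} //
      (p.1 : Matrix (Fin n) (Fin n) F) * (X + (p.2 : Matrix (Fin n) (Fin m) F)) = Y} : ℝ) /
    ((Nat.card (Matrix.GeneralLinearGroup (Fin n) F) : ℝ) *
      (Nat.card {W : Matrix (Fin n) (Fin m) F // W.rank = t} : ℝ))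

theorem mutualInfoB_ge_of_sum_le_one {α β : Type*} [Fintype α] [Fintype β] {b : ℝ} (hb : 1 < b)
    {p : α → ℝ} {K g : α → β → ℝ} (hp : ∀ x, 0 ≤ p x) (hp1 : ∑ x, p x = 1)
    (hK : ∀ x y, 0 ≤ K x y) (hK1 : ∀ x, p x ≠ 0 → ∑ y, K x y = 1)
    (hg1 : ∀ y, ∑ x, p x * g x y ≤ 1)
    (hg : ∀ x y, p x ≠ 0 → K x y ≠ 0 → 0 < g x y) (hg0 : ∀ x y, 0 ≤ g x y) :
    ∑ x, ∑ y, p x * K x y * Real.logb b (g x y) ≤ mutualInfoB b p K := by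
  have hlb : 0 < Real.log b := Real.log_pos hb
  set Q : β → ℝ := fun y => ∑ x, p x * K x y with hQ
  have hQ0 : ∀ y, 0 ≤ Q y := fun y => Finset.sum_nonneg fun x _ => mul_nonneg (hp x) (hK x y)
  have hpK : ∑ x, ∑ y, p x * K x y = 1 := by
    rw [← hp1]
    refine Finset.sum_congr rfl fun x _ => ?_
    rw [← Finset.mul_sum]
    by_cases hx : p x = 0
    · simp [hx]
    · rw [hK1 x hx, mul_one]
  have hQ1 : ∑ y, Q y = 1 := by rw [← hpK, Finset.sum_comm]
  have key : ∀ x y, p x * K x y * Real.logb b (g x y) + (p x * K x y - Q y * (p x * g x y))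
      / Real.log b ≤ p x * K x y * Real.logb b (K x y / Q y) := by
    intro x y
    by_cases hx : p x = 0
    · simp [hx]
    by_cases hy : K x y = 0
    · have : 0 ≤ Q y * (p x * g x y) / Real.log b :=
        div_nonneg (mul_nonneg (hQ0 y) (mul_nonneg (hp x) (hg0 x y))) hlb.le
      simp only [hy, mul_zero, zero_mul, zero_sub, zero_add, neg_div]
      linarith
    have hpx : 0 < p x := lt_of_le_of_ne (hp x) (Ne.symm hx)
    have hKx : 0 < K x y := lt_of_le_of_ne (hK x y) (Ne.symm hy)
    have hgx := hg x y hx hy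
    have hQy : 0 < Q y := lt_of_lt_of_le (mul_pos hpx hKx)
      (Finset.single_le_sum (f := fun x => p x * K x y)
        (fun x _ => mul_nonneg (hp x) (hK x y)) (Finset.mem_univ x))
    have h1 := Real.log_le_sub_one_of_pos (x := Q y * g x y / K x y) (by positivity)
    have h2 : Real.log (Q y * g x y / K x y) = Real.log (g x y) - Real.log (K x y / Q y) := by
      rw [Real.log_div (by positivity) hy, Real.log_mul (by positivity) (by positivity),
        Real.log_div hy (by positivity)]
      ring
    rw [h2] at h1
    have h3 : p x * K x y * (Real.log (g x y) - Real.log (K x y / Q y)) ≤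
        p x * K x y * (Q y * g x y / K x y - 1) :=
      mul_le_mul_of_nonneg_left h1 (by positivity)
    have h4 : p x * K x y * (Q y * g x y / K x y - 1) = Q y * (p x * g x y) - p x * K x y := by
      field_simp
    simp only [Real.logb, mul_div_assoc']
    rw [← add_div]
    gcongr
    linarith
  have hsum := Finset.sum_le_sum fun x (_ : x ∈ Finset.univ) =>
    Finset.sum_le_sum fun y (_ : y ∈ Finset.univ) => key x y
  have h5 : 0 ≤ ∑ x, ∑ y, (p x * K x y - Q y * (p x * g x y)) / Real.log b := by
    simp only [← Finset.sum_div, Finset.sum_sub_distrib, hpK]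
    refine div_nonneg (sub_nonneg.2 ?_) hlb.le
    rw [Finset.sum_comm, ← hQ1]
    refine Finset.sum_le_sum fun y _ => ?_
    rw [← Finset.mul_sum]
    exact mul_le_of_le_one_right (hQ0 y) (hg1 y)
  simp only [Finset.sum_add_distrib] at hsum
  unfold mutualInfoB
  linarith

theorem mutualInfoB_le {α β : Type*} [Fintype α] [Fintype β] {b : ℝ} (hb : 1 < b)
    {p : α → ℝ} {K : α → β → ℝ} (hp : ∀ x, 0 ≤ p x) (hK : ∀ x y, 0 ≤ K x y) :
    mutualInfoB b p K ≤ ∑ x, ∑ y, K x y / Real.log b := by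
  have hlb : 0 < Real.log b := Real.log_pos hb
  refine Finset.sum_le_sum fun x _ => Finset.sum_le_sum fun y _ => ?_
  set Q := ∑ x', p x' * K x' y with hQ
  have hle : p x * K x y ≤ Q := Finset.single_le_sum (f := fun x => p x * K x y)
        (fun x _ => mul_nonneg (hp x) (hK x y)) (Finset.mem_univ x)
  have h0 : 0 ≤ p x * K x y := mul_nonneg (hp x) (hK x y)
  rw [Real.logb, mul_div_assoc']
  gcongr
  have h1 : 0 ≤ K x y / Q := div_nonneg (hK x y) (h0.trans hle)
  calc p x * K x y * Real.log (K x y / Q) ≤ p x * K x y * (K x y / Q) :=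
        mul_le_mul_of_nonneg_left (Real.log_le_self h1) h0
    _ ≤ Q * (K x y / Q) := mul_le_mul_of_nonneg_right hle h1
    _ ≤ K x y := by
        rcases eq_or_ne Q 0 with h | h
        · simp [h, hK x y]
        · rw [mul_div_cancel₀ _ h]

theorem mutualInfoB_le_capacityB {α β : Type*} [Fintype α] [Fintype β] {b : ℝ} (hb : 1 < b)
    {p : α → ℝ} {K : α → β → ℝ} (hp : ∀ x, 0 ≤ p x) (hp1 : ∑ x, p x = 1)
    (hK : ∀ x y, 0 ≤ K x y) : mutualInfoB b p K ≤ capacityB b K := by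
  refine le_csSup ⟨∑ x, ∑ y, K x y / Real.log b, ?_⟩ ⟨p, hp, hp1, rfl⟩
  rintro c ⟨p', hp', -, rfl⟩
  exact mutualInfoB_le hb hp' hK

/-- For `b ≤ a`, the number of linearly independent `b`-tuples in an `a`-dimensional space over
the field with `q` elements. -/
def frameCard (q : ℝ) (a b : ℕ) : ℝ := ∏ i ∈ Finset.range b, (q ^ a - q ^ i)

theorem frameCard_pos {q : ℝ} (hq : 1 < q) {a b : ℕ} (h : b ≤ a) : 0 < frameCard q a b := by
  refine Finset.prod_pos fun i hi => sub_pos.2 (pow_lt_pow_right₀ hq ?_)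
  exact (Finset.mem_range.1 hi).trans_le h

theorem frameCard_le_pow {q : ℝ} (hq : 1 < q) {a b : ℕ} (h : b ≤ a) :
    frameCard q a b ≤ q ^ (a * b) := by
  have h0 : 0 < q := by linarith
  calc frameCard q a b ≤ ∏ i ∈ Finset.range b, q ^ a := by
        refine Finset.prod_le_prod (fun i hi => sub_nonneg.2 (pow_le_pow_right₀ hq.le ?_))
          fun i _ => sub_le_self _ (by positivity)
        exact ((Finset.mem_range.1 hi).trans_le h).le
    _ = q ^ (a * b) := by simp [pow_mul]

theorem pow_mul_frameCard_le {q : ℝ} (hq : 1 < q) {a b c : ℕ} (hb : b ≤ a) :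
    q ^ (c * b) * frameCard q a b ≤ frameCard q (a + c) b := by
  have h0 : 0 < q := by linarith
  have : q ^ (c * b) = ∏ i ∈ Finset.range b, q ^ c := by simp [pow_mul]
  rw [this, frameCard, ← Finset.prod_mul_distrib]
  refine Finset.prod_le_prod (fun i hi => mul_nonneg (by positivity)
    (sub_nonneg.2 (pow_le_pow_right₀ hq.le ((Finset.mem_range.1 hi).trans_le hb).le)))
    fun i _ => ?_
  have h1 : (1 : ℝ) ≤ q ^ c := one_le_pow₀ hq.le
  have h2 : (0 : ℝ) < q ^ i := by positivity
  rw [pow_add]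
  nlinarith

theorem pow_le_four_mul_frameCard_self {q : ℝ} (hq : 2 ≤ q) (b : ℕ) :
    q ^ (b * b) ≤ 4 * frameCard q b b := by
  have h0 : 0 < q := by linarith
  have hprod : ∀ b : ℕ, 1 / 4 + (1 / 2) * (1 / 2 : ℝ) ^ (b + 1) ≤
      ∏ i ∈ Finset.range (b + 1), (1 - (1 / q) ^ (i + 1)) := by
    intro b
    induction b with
    | zero =>
      have : 1 / q ≤ 1 / 2 := by gcongr
      simp only [zero_add, Finset.range_one, Finset.prod_singleton, pow_one]
      linarith
    | succ b ih =>
      rw [Finset.prod_range_succ]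
      have h1 : (1 / q) ^ (b + 1 + 1) ≤ (1 / 2 : ℝ) ^ (b + 1 + 1) := by gcongr
      have h2 : (0 : ℝ) < (1 / 2) ^ (b + 1 + 1) := by positivity
      have h3 : (1 / 2 : ℝ) ^ (b + 1 + 1) ≤ 1 / 4 := by
        rw [pow_succ, pow_succ]
        have : (1 / 2 : ℝ) ^ b ≤ 1 := pow_le_one₀ (by norm_num) (by norm_num)
        linarith
      have h4 : (1 / 2 : ℝ) ^ (b + 1) = 2 * (1 / 2) ^ (b + 1 + 1) := by
        rw [pow_succ _ (b + 1)]; ring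
      refine le_trans ?_ (mul_le_mul ih (sub_le_sub_left h1 1) (by linarith)
        (by rw [h4] at ih; exact le_trans (by positivity) ih))
      rw [h4]
      nlinarith
  have hq4 : (1 : ℝ) / 4 ≤ ∏ i ∈ Finset.range b, (1 - (1 / q) ^ (i + 1)) := by
    cases b with
    | zero => norm_num
    | succ b => exact le_trans (by have : (0 : ℝ) < (1 / 2) ^ (b + 1) := by positivity
                                   linarith) (hprod b)
  have heq : frameCard q b b = q ^ (b * b) * ∏ i ∈ Finset.range b, (1 - (1 / q) ^ (i + 1)) := by
    have hpow : q ^ (b * b) = ∏ _i ∈ Finset.range b, q ^ b := by simp [pow_mul]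
    rw [← Finset.prod_range_reflect (fun i => 1 - (1 / q) ^ (i + 1)), frameCard, hpow,
      ← Finset.prod_mul_distrib]
    refine Finset.prod_congr rfl fun i hi => ?_
    have hi := Finset.mem_range.1 hi
    have h5 : q ^ b = q ^ i * q ^ (b - 1 - i + 1) := by rw [← pow_add]; congr 1; omega
    rw [mul_sub, mul_one, div_pow, one_pow]
    congr 1
    rw [h5]
    field_simp
  rw [heq]
  have : 0 < q ^ (b * b) := by positivity
  nlinarith

section Counting

variable {F : Type} [Field F]

theorem exists_isUnit_det_vecMul_eq {m b : ℕ} {v w : Fin b → Fin m → F}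
    (hv : LinearIndependent F v) (hw : LinearIndependent F w) :
    ∃ S : Matrix (Fin m) (Fin m) F, IsUnit S.det ∧ ∀ i, Matrix.vecMul (v i) S = w i := by
  let f := hv.linearCombinationEquiv.symm ≪≫ₗ hw.linearCombinationEquiv
  obtain ⟨g, hg⟩ := Submodule.exists_linearEquiv_restrict_eq f
  have hgv : ∀ i, g (v i) = w i := by
    intro i
    have h := hg ⟨v i, Submodule.subset_span ⟨i, rfl⟩⟩
    have h2 : hv.linearCombinationEquiv.symm ⟨v i, Submodule.subset_span ⟨i, rfl⟩⟩ =
        Finsupp.single i 1 := by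
      rw [LinearEquiv.symm_apply_eq]
      ext1
      simp [LinearIndependent.linearCombinationEquiv_apply_coe]
    simp only [f, LinearEquiv.trans_apply, h2,
      LinearIndependent.linearCombinationEquiv_apply_coe] at h
    rw [← h]
    simp
  refine ⟨(LinearMap.toMatrix' (g : (Fin m → F) →ₗ[F] (Fin m → F))).transpose, ?_, fun i => ?_⟩
  · rw [Matrix.det_transpose, LinearMap.det_toMatrix']
    exact LinearEquiv.isUnit_det' g
  · rw [Matrix.vecMul_transpose, LinearMap.toMatrix'_mulVec]
    exact hgv i

/-- The row space of a matrix. -/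
abbrev rowSpace {n m : ℕ} (M : Matrix (Fin n) (Fin m) F) : Submodule F (Fin m → F) :=
  LinearMap.range M.vecMulLinear

theorem finrank_rowSpace {n m : ℕ} (M : Matrix (Fin n) (Fin m) F) :
    Module.finrank F (rowSpace M) = M.rank := by
  rw [Matrix.rank_eq_finrank_span_row, rowSpace, range_vecMulLinear]

theorem vecMul_mem_rowSpace_mul {n m : ℕ} {M : Matrix (Fin n) (Fin m) F} {v : Fin m → F}
    (h : v ∈ rowSpace M) (S : Matrix (Fin m) (Fin m) F) :
    Matrix.vecMul v S ∈ rowSpace (M * S) := by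
  obtain ⟨a, rfl⟩ := h
  exact ⟨a, by simp [Matrix.vecMul_vecMul]⟩

theorem rowSpace_mul_le {n m : ℕ} (A : Matrix (Fin n) (Fin n) F) (M : Matrix (Fin n) (Fin m) F) :
    rowSpace (A * M) ≤ rowSpace M := by
  rintro _ ⟨a, rfl⟩
  exact ⟨Matrix.vecMul a A, by simp [Matrix.vecMul_vecMul]⟩

theorem rowSpace_add_le {n m : ℕ} (M N : Matrix (Fin n) (Fin m) F) :
    rowSpace (M + N) ≤ rowSpace M ⊔ rowSpace N := by
  rintro _ ⟨a, rfl⟩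
  simp only [Matrix.vecMulLinear_apply, Matrix.vecMul_add]
  exact Submodule.add_mem_sup ⟨a, rfl⟩ ⟨a, rfl⟩

variable [Fintype F]

open Classical in
/-- The linearly independent `b`-tuples of vectors of a subspace. -/
noncomputable def frames {m : ℕ} (U : Submodule F (Fin m → F)) (b : ℕ) :
    Finset (Fin b → Fin m → F) :=
  Finset.univ.filter fun v => LinearIndependent F v ∧ ∀ i, v i ∈ U

theorem mem_frames {m b : ℕ} {U : Submodule F (Fin m → F)} {v : Fin b → Fin m → F} :
    v ∈ frames U b ↔ LinearIndependent F v ∧ ∀ i, v i ∈ U := by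
  simp [frames]

theorem card_frames {m b : ℕ} {U : Submodule F (Fin m → F)} (hb : b ≤ Module.finrank F U) :
    ((frames U b).card : ℝ) = frameCard (Fintype.card F) (Module.finrank F U) b := by
  have h := card_linearIndependent (K := F) (V := U) hb
  have e : {s : Fin b → U // LinearIndependent F s} ≃ {v // v ∈ frames U b} :=
    { toFun := fun s => ⟨fun i => s.1 i, mem_frames.2
        ⟨s.2.map' U.subtype (Submodule.ker_subtype U), fun i => (s.1 i).2⟩⟩
      invFun := fun v => ⟨fun i => ⟨v.1 i, (mem_frames.1 v.2).2 i⟩,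
        LinearIndependent.of_comp U.subtype (mem_frames.1 v.2).1⟩
      left_inv := fun s => rfl
      right_inv := fun v => rfl }
  rw [Nat.card_congr e, Nat.card_eq_fintype_card, Fintype.card_coe] at h
  rw [h, frameCard, Nat.cast_prod, Finset.prod_range fun i =>
    ((Fintype.card F : ℝ) ^ Module.finrank F U - (Fintype.card F : ℝ) ^ i)]
  refine Finset.prod_congr rfl fun i _ => ?_
  rw [Nat.cast_sub (Nat.pow_le_pow_right Fintype.card_pos (i.2.le.trans hb))]
  simp

open Classical in
/-- The matrices of a given rank. -/
noncomputable def rankSet (F : Type) [Field F] [Fintype F] (n m k : ℕ) :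
    Finset (Matrix (Fin n) (Fin m) F) :=
  Finset.univ.filter fun M => M.rank = k

theorem mem_rankSet {n m k : ℕ} {M : Matrix (Fin n) (Fin m) F} :
    M ∈ rankSet F n m k ↔ M.rank = k := by
  simp [rankSet]

theorem natCard_rank_eq (n m k : ℕ) :
    Nat.card {M : Matrix (Fin n) (Fin m) F // M.rank = k} = (rankSet F n m k).card := by
  classical
  rw [Nat.card_eq_fintype_card, Fintype.card_subtype, rankSet]

theorem rankSet_card_pos {n m k : ℕ} (hn : k ≤ n) (hm : k ≤ m) : 0 < (rankSet F n m k).card := by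
  let A : Matrix (Fin n) (Fin k) F := Matrix.submatrix 1 id (Fin.castLE hn)
  let A' : Matrix (Fin k) (Fin n) F := Matrix.submatrix 1 (Fin.castLE hn) id
  let B : Matrix (Fin k) (Fin m) F := Matrix.submatrix 1 (Fin.castLE hm) id
  let B' : Matrix (Fin m) (Fin k) F := Matrix.submatrix 1 id (Fin.castLE hm)
  have hA : A' * A = 1 := by
    rw [← Matrix.submatrix_mul _ _ _ _ _ Function.bijective_id, one_mul,
      Matrix.submatrix_one _ (Fin.castLE_injective hn)]
  have hB : B * B' = 1 := by
    rw [← Matrix.submatrix_mul _ _ _ _ _ Function.bijective_id, one_mul,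
      Matrix.submatrix_one _ (Fin.castLE_injective hm)]
  refine Finset.card_pos.2 ⟨A * B, mem_rankSet.2 (le_antisymm ?_ ?_)⟩
  · exact (Matrix.rank_mul_le_right A B).trans (by simpa using Matrix.rank_le_card_height B)
  · have h : A' * (A * B) * B' = 1 := by
      rw [← Matrix.mul_assoc, hA, Matrix.one_mul, hB]
    calc k = (1 : Matrix (Fin k) (Fin k) F).rank := by simp
      _ ≤ (A * B).rank := by
        rw [← h]
        exact (Matrix.rank_mul_le_left _ _).trans (Matrix.rank_mul_le_right _ _)

open Classical in
theorem card_rankSet_frame_le {n m k b : ℕ} {v w : Fin b → Fin m → F}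
    (hv : LinearIndependent F v) (hw : LinearIndependent F w) :
    ((rankSet F n m k).filter fun x => ∀ i, v i ∈ rowSpace x).card ≤
      ((rankSet F n m k).filter fun x => ∀ i, w i ∈ rowSpace x).card := by
  obtain ⟨S, hS, hvw⟩ := exists_isUnit_det_vecMul_eq hv hw
  refine Finset.card_le_card_of_injOn (fun x => x * S) ?_ ?_
  · intro x hx
    simp only [Finset.coe_filter, Set.mem_ofPred_eq, mem_rankSet] at hx ⊢
    refine ⟨by rw [Matrix.rank_mul_eq_left_of_isUnit_det _ _ hS, hx.1], fun i => ?_⟩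
    rw [← hvw i]
    exact vecMul_mem_rowSpace_mul (hx.2 i) S
  · intro x _ y _ hxy
    have h := congrArg (fun M => M * S⁻¹) hxy
    simpa [Matrix.mul_assoc, Matrix.mul_nonsing_inv S hS] using h

open Classical in
theorem sum_card_frames_comm {n m k b : ℕ} (U : Submodule F (Fin m → F)) :
    ∑ x ∈ rankSet F n m k, (frames (rowSpace x ⊓ U) b).card =
      ∑ v ∈ frames U b, ((rankSet F n m k).filter fun x => ∀ i, v i ∈ rowSpace x).card := by
  simp only [Finset.card_filter]
  rw [Finset.sum_comm]
  refine Finset.sum_congr rfl fun x _ => ?_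
  rw [← Finset.card_filter]
  congr 1
  ext v
  simp only [mem_frames, Submodule.mem_inf, Finset.mem_filter, forall_and]
  tauto

theorem sum_card_frames {n m k b : ℕ} (hbk : b ≤ k) (hkm : k ≤ m) (U : Submodule F (Fin m → F))
    (hU : b ≤ Module.finrank F U) :
    (∑ x ∈ rankSet F n m k, ((frames (rowSpace x ⊓ U) b).card : ℝ)) *
      frameCard (Fintype.card F) m b =
      (rankSet F n m k).card * (frameCard (Fintype.card F) k b *
        frameCard (Fintype.card F) (Module.finrank F U) b) := by
  classical
  have hq : (1 : ℝ) < Fintype.card F := by exact_mod_cast Fintype.one_lt_card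
  have hUpos := frameCard_pos hq hU
  have htop : Module.finrank F (⊤ : Submodule F (Fin m → F)) = m := by simp
  rw [← card_frames hU] at hUpos ⊢
  obtain ⟨v, hv⟩ := Finset.card_pos.1 (by exact_mod_cast hUpos)
  have hc : ∀ U : Submodule F (Fin m → F),
      (∑ x ∈ rankSet F n m k, ((frames (rowSpace x ⊓ U) b).card : ℝ)) =
      (frames U b).card *
        ((rankSet F n m k).filter fun x => ∀ i, v i ∈ rowSpace x).card := by
    intro U
    have h := sum_card_frames_comm (n := n) (k := k) (b := b) U
    rw [Finset.sum_congr rfl fun w hw => le_antisymm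
      (card_rankSet_frame_le (mem_frames.1 hw).1 (mem_frames.1 hv).1)
      (card_rankSet_frame_le (mem_frames.1 hv).1 (mem_frames.1 hw).1), Finset.sum_const,
      smul_eq_mul] at h
    exact_mod_cast h
  have h1 := hc ⊤
  rw [card_frames (by rw [htop]; omega), htop, Finset.sum_congr rfl (g := fun _ =>
    frameCard (Fintype.card F) k b), Finset.sum_const, nsmul_eq_mul] at h1
  · rw [hc U]
    linear_combination -((frames U b).card : ℝ) * h1
  · intro x hx
    have hx := mem_rankSet.1 hx
    rw [inf_top_eq, card_frames (by rw [finrank_rowSpace]; omega), finrank_rowSpace, hx]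

end Counting

section Channel

variable {F : Type} [Field F]

theorem exists_isUnit_det_vecMul_eq_of_ne_zero {m : ℕ} {v w : Fin m → F} (hv : v ≠ 0)
    (hw : w ≠ 0) : ∃ S : Matrix (Fin m) (Fin m) F, IsUnit S.det ∧ Matrix.vecMul v S = w := by
  obtain ⟨S, hS, h⟩ := exists_isUnit_det_vecMul_eq (b := 1) (v := fun _ => v) (w := fun _ => w)
    (linearIndependent_unique_iff.2 hv) (linearIndependent_unique_iff.2 hw)
  exact ⟨S, hS, h 0⟩

variable [Fintype F]

open Classical in
theorem card_vecMul_eq_zero {n m : ℕ} (M : Matrix (Fin n) (Fin m) F) :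
    (Finset.univ.filter fun v => Matrix.vecMul v M = 0).card =
      Fintype.card F ^ (n - M.rank) := by
  have h1 := LinearMap.finrank_range_add_finrank_ker M.vecMulLinear
  rw [finrank_rowSpace, Module.finrank_fintype_fun_eq_card, Fintype.card_fin] at h1
  have h2 := Module.card_eq_pow_finrank (K := F) (V := LinearMap.ker M.vecMulLinear)
  rw [show n - M.rank = Module.finrank F (LinearMap.ker M.vecMulLinear) by omega, ← h2,
    ← Fintype.card_coe]
  refine Fintype.card_congr (Equiv.subtypeEquivRight fun v => ?_)
  simp

open Classical in
theorem card_rankSet_vecMul_eq_zero_mul {n m t : ℕ} {v : Fin n → F} (hv : v ≠ 0) :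
    (((rankSet F n m t).filter fun W => Matrix.vecMul v W = 0).card : ℝ) *
      ((Fintype.card F : ℝ) ^ n - 1) =
      (rankSet F n m t).card * ((Fintype.card F : ℝ) ^ (n - t) - 1) := by
  have hle : ∀ v w : Fin n → F, v ≠ 0 → w ≠ 0 →
      ((rankSet F n m t).filter fun W => Matrix.vecMul v W = 0).card ≤
      ((rankSet F n m t).filter fun W => Matrix.vecMul w W = 0).card := by
    intro v w hv hw
    obtain ⟨S, hS, hwv⟩ := exists_isUnit_det_vecMul_eq_of_ne_zero hw hv
    refine Finset.card_le_card_of_injOn (fun W => S * W) ?_ ?_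
    · intro W hW
      simp only [Finset.coe_filter, Set.mem_ofPred_eq, mem_rankSet] at hW ⊢
      refine ⟨by rw [Matrix.rank_mul_eq_right_of_isUnit_det _ _ hS, hW.1], ?_⟩
      rw [← Matrix.vecMul_vecMul, hwv, hW.2]
    · intro x _ y _ hxy
      have h := congrArg (fun M => S⁻¹ * M) hxy
      simpa [← Matrix.mul_assoc, Matrix.nonsing_inv_mul S hS] using h
  have hcomm : ∑ w ∈ Finset.univ.erase (0 : Fin n → F),
      ((rankSet F n m t).filter fun W => Matrix.vecMul w W = 0).card =
      ∑ W ∈ rankSet F n m t, (Fintype.card F ^ (n - t) - 1) := by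
    simp only [Finset.card_filter]
    rw [Finset.sum_comm]
    refine Finset.sum_congr rfl fun W hW => ?_
    rw [← mem_rankSet.1 hW, ← card_vecMul_eq_zero, ← Finset.card_filter, Finset.filter_erase,
      Finset.card_erase_of_mem (by simp)]
  rw [Finset.sum_congr rfl fun w hw => le_antisymm (hle w v (Finset.ne_of_mem_erase hw) hv)
      (hle v w hv (Finset.ne_of_mem_erase hw)), Finset.sum_const, Finset.sum_const,
      smul_eq_mul, smul_eq_mul, Finset.card_erase_of_mem (Finset.mem_univ _), Finset.card_univ,
      Fintype.card_fun, Fintype.card_fin] at hcomm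
  have h := congrArg (Nat.cast : ℕ → ℝ) hcomm
  have hq : ∀ j, 1 ≤ Fintype.card F ^ j := fun j => Nat.one_le_pow _ _ Fintype.card_pos
  push_cast [hq] at h
  rw [mul_comm, h]

open Classical in
theorem card_rankSet_vecMul_eq_mul_le {n m t : ℕ} {v : Fin n → F} {u : Fin m → F} (hu : u ≠ 0) :
    (((rankSet F n m t).filter fun W => Matrix.vecMul v W = u).card : ℝ) *
      ((Fintype.card F : ℝ) ^ m - 1) ≤ (rankSet F n m t).card := by
  have hle : ∀ w : Fin m → F, w ≠ 0 →
      ((rankSet F n m t).filter fun W => Matrix.vecMul v W = u).card ≤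
      ((rankSet F n m t).filter fun W => Matrix.vecMul v W = w).card := by
    intro w hw
    obtain ⟨S, hS, huw⟩ := exists_isUnit_det_vecMul_eq_of_ne_zero hu hw
    refine Finset.card_le_card_of_injOn (fun W => W * S) ?_ ?_
    · intro W hW
      simp only [Finset.coe_filter, Set.mem_ofPred_eq, mem_rankSet] at hW ⊢
      refine ⟨by rw [Matrix.rank_mul_eq_left_of_isUnit_det _ _ hS, hW.1], ?_⟩
      rw [← Matrix.vecMul_vecMul, hW.2, huw]
    · intro x _ y _ hxy
      have h := congrArg (fun M => M * S⁻¹) hxy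
      simpa [Matrix.mul_assoc, Matrix.mul_nonsing_inv S hS] using h
  have h1 : ∑ w ∈ Finset.univ.erase (0 : Fin m → F),
      ((rankSet F n m t).filter fun W => Matrix.vecMul v W = u).card ≤
      (rankSet F n m t).card := by
    refine (Finset.sum_le_sum fun w hw => hle w (Finset.ne_of_mem_erase hw)).trans ?_
    refine (Finset.sum_le_sum_of_subset (Finset.erase_subset _ _)).trans_eq ?_
    exact (Finset.card_eq_sum_card_fiberwise fun _ _ => Finset.mem_coe.2 (Finset.mem_univ _)).symm
  rw [Finset.sum_const, smul_eq_mul, Finset.card_erase_of_mem (Finset.mem_univ _),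
    Finset.card_univ, Fintype.card_fun, Fintype.card_fin] at h1
  have h := (Nat.cast_le (α := ℝ)).2 h1
  have hq : 1 ≤ Fintype.card F ^ m := Nat.one_le_pow _ _ Fintype.card_pos
  push_cast [hq] at h
  linarith

/-- A bound on the average number of vectors in the left kernel of the sum of a matrix of rank `k`
and a random matrix of rank `t`. -/
theorem sum_pow_corank_add_le {n m k t : ℕ} (hn : 0 < n) (hnm : n ≤ m) (hk : k ≤ n) (ht : t ≤ n)
    {X : Matrix (Fin n) (Fin m) F} (hX : X.rank = k) :
    ∑ W ∈ rankSet F n m t, (Fintype.card F : ℝ) ^ (n - (X + W).rank) ≤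
      (rankSet F n m t).card * (1 + (Fintype.card F : ℝ) ^ (n - k) * (Fintype.card F : ℝ) ^ (n - t)
        / (Fintype.card F : ℝ) ^ n + (Fintype.card F : ℝ) ^ n / (Fintype.card F : ℝ) ^ m) := by
  classical
  have hq : (1 : ℝ) < Fintype.card F := by exact_mod_cast Fintype.one_lt_card
  set q : ℝ := (Fintype.card F : ℝ) with hqdef
  set N : ℝ := ((rankSet F n m t).card : ℝ) with hN
  have hN0 : 0 ≤ N := Nat.cast_nonneg _
  have hqn : 1 < q ^ n := one_lt_pow₀ hq hn.ne'
  have hqm : 1 < q ^ m := one_lt_pow₀ hq (by omega)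
  have hqnm : q ^ n ≤ q ^ m := pow_le_pow_right₀ hq.le hnm
  set a : ℝ := N * (q ^ (n - t) - 1) / (q ^ n - 1) with ha
  set c : ℝ := N / (q ^ m - 1) with hc
  have hc0 : 0 ≤ c := div_nonneg hN0 (by linarith)
  have hswap : ∑ W ∈ rankSet F n m t, q ^ (n - (X + W).rank) = ∑ v : Fin n → F,
      (((rankSet F n m t).filter fun W => Matrix.vecMul v W = -Matrix.vecMul v X).card : ℝ) := by
    have h : ∀ W, q ^ (n - (X + W).rank) =
        ((Finset.univ.filter fun v => Matrix.vecMul v (X + W) = 0).card : ℝ) := by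
      intro W
      rw [card_vecMul_eq_zero]
      push_cast
      rfl
    simp only [h, Finset.card_filter]
    push_cast
    rw [Finset.sum_comm]
    refine Finset.sum_congr rfl fun v _ => Finset.sum_congr rfl fun W _ => ?_
    simp only [Matrix.vecMul_add, add_comm (Matrix.vecMul v X), add_eq_zero_iff_eq_neg]
  have hv : ∀ v ∈ Finset.univ.erase (0 : Fin n → F),
      (((rankSet F n m t).filter fun W => Matrix.vecMul v W = -Matrix.vecMul v X).card : ℝ) ≤
      (if Matrix.vecMul v X = 0 then a else 0) + c := by
    intro v hv
    split_ifs with h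
    · rw [h, neg_zero]
      refine le_trans (le_of_eq ?_) (le_add_of_nonneg_right hc0)
      rw [ha, eq_div_iff (by linarith)]
      exact card_rankSet_vecMul_eq_zero_mul (Finset.ne_of_mem_erase hv)
    · rw [zero_add, hc, le_div_iff₀ (by linarith)]
      exact card_rankSet_vecMul_eq_mul_le (neg_ne_zero.2 h)
  have h0 : (((rankSet F n m t).filter
      fun W => Matrix.vecMul (0 : Fin n → F) W = -Matrix.vecMul 0 X).card : ℝ) = N := by
    simp [hN]
  have hcount : ∑ v ∈ Finset.univ.erase (0 : Fin n → F),
      ((if Matrix.vecMul v X = 0 then a else 0) + c) =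
      (q ^ (n - k) - 1) * a + (q ^ n - 1) * c := by
    have hq1 : ∀ j, 1 ≤ Fintype.card F ^ j := fun j => Nat.one_le_pow _ _ Fintype.card_pos
    rw [Finset.sum_add_distrib, ← Finset.sum_filter, Finset.sum_const, Finset.sum_const,
      Finset.filter_erase, Finset.card_erase_of_mem (by simp), card_vecMul_eq_zero, hX,
      Finset.card_erase_of_mem (Finset.mem_univ _), Finset.card_univ, Fintype.card_fun,
      Fintype.card_fin, nsmul_eq_mul, nsmul_eq_mul]
    push_cast [hq1]
    rfl
  have hA : 1 ≤ q ^ (n - k) := one_le_pow₀ hq.le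
  have hB : 1 ≤ q ^ (n - t) := one_le_pow₀ hq.le
  have hAn : q ^ (n - k) ≤ q ^ n := pow_le_pow_right₀ hq.le (by omega)
  have hBn : q ^ (n - t) ≤ q ^ n := pow_le_pow_right₀ hq.le (by omega)
  have e1 : (q ^ (n - k) - 1) * a ≤ N * (q ^ (n - k) * q ^ (n - t) / q ^ n) := by
    generalize q ^ (n - k) = A at *
    generalize q ^ (n - t) = B at *
    generalize q ^ n = Q at *
    have : (A - 1) * (B - 1) / (Q - 1) ≤ A * B / Q := by
      rw [div_le_div_iff₀ (by linarith) (by linarith)]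
      nlinarith [mul_nonneg (sub_nonneg.2 hAn) (by linarith : 0 ≤ B)]
    calc (A - 1) * a = N * ((A - 1) * (B - 1) / (Q - 1)) := by rw [ha]; ring
      _ ≤ _ := mul_le_mul_of_nonneg_left this hN0
  have e2 : (q ^ n - 1) * c ≤ N * (q ^ n / q ^ m) := by
    have : (q ^ n - 1) / (q ^ m - 1) ≤ q ^ n / q ^ m := by
      rw [div_le_div_iff₀ (by linarith) (by linarith)]
      nlinarith
    calc (q ^ n - 1) * c = N * ((q ^ n - 1) / (q ^ m - 1)) := by rw [hc]; ring
      _ ≤ _ := mul_le_mul_of_nonneg_left this hN0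
  rw [hswap, ← Finset.add_sum_erase _ _ (Finset.mem_univ 0), h0]
  have := Finset.sum_le_sum hv
  rw [hcount] at this
  linarith

theorem ammcKernel_nonneg (n m t : ℕ) (X Y : Matrix (Fin n) (Fin m) F) :
    0 ≤ ammcKernel F n m t X Y := by
  unfold ammcKernel
  positivity

theorem exists_of_ammcKernel_ne_zero {n m t : ℕ} {X Y : Matrix (Fin n) (Fin m) F}
    (h : ammcKernel F n m t X Y ≠ 0) :
    ∃ (A : Matrix.GeneralLinearGroup (Fin n) F) (W : Matrix (Fin n) (Fin m) F), W.rank = t ∧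
      (A : Matrix (Fin n) (Fin n) F) * (X + W) = Y := by
  have h1 := (div_ne_zero_iff.1 h).1
  obtain ⟨⟨p, hp⟩⟩ := (Nat.card_ne_zero.1 (Nat.cast_ne_zero.1 h1)).1
  exact ⟨p.1, p.2.1, p.2.2, hp⟩

theorem sum_ammcKernel_mul (n m t : ℕ) (X : Matrix (Fin n) (Fin m) F) (φ : ℕ → ℝ) :
    ∑ Y, ammcKernel F n m t X Y * φ Y.rank =
      (∑ W ∈ rankSet F n m t, φ (X + W).rank) / (rankSet F n m t).card := by
  classical
  have hGL : (0 : ℝ) < Nat.card (Matrix.GeneralLinearGroup (Fin n) F) := by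
    exact_mod_cast Nat.card_pos
  have hcard : ∀ Y : Matrix (Fin n) (Fin m) F,
      (Nat.card {p : Matrix.GeneralLinearGroup (Fin n) F ×
        {W : Matrix (Fin n) (Fin m) F // W.rank = t} //
      (p.1 : Matrix (Fin n) (Fin n) F) * (X + (p.2 : Matrix (Fin n) (Fin m) F)) = Y} : ℝ) =
      ∑ p : Matrix.GeneralLinearGroup (Fin n) F × {W : Matrix (Fin n) (Fin m) F // W.rank = t},
        if (p.1 : Matrix (Fin n) (Fin n) F) * (X + (p.2 : Matrix (Fin n) (Fin m) F)) = Y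
          then 1 else 0 := by
    intro Y
    rw [Nat.card_eq_fintype_card, Fintype.card_subtype, Finset.card_filter]
    push_cast
    rfl
  have hrank : ∀ (A : Matrix.GeneralLinearGroup (Fin n) F) (W : Matrix (Fin n) (Fin m) F),
      ((A : Matrix (Fin n) (Fin n) F) * (X + W)).rank = (X + W).rank := fun A W =>
    Matrix.rank_mul_eq_right_of_isUnit_det _ _ ((Matrix.isUnit_iff_isUnit_det _).1 A.isUnit)
  have hsub : ∑ W : {W : Matrix (Fin n) (Fin m) F // W.rank = t}, φ (X + W.1).rank =
      ∑ W ∈ rankSet F n m t, φ (X + W).rank :=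
    (Finset.sum_subtype (rankSet F n m t) (fun _ => mem_rankSet) fun W => φ (X + W).rank).symm
  unfold ammcKernel
  simp only [div_mul_eq_mul_div, ← Finset.sum_div, hcard, natCard_rank_eq, Finset.sum_mul]
  rw [Finset.sum_comm]
  simp only [ite_mul, one_mul, zero_mul, Finset.sum_ite_eq, Finset.mem_univ, if_true, hrank,
    Fintype.sum_prod_type, hsub, Finset.sum_const, Finset.card_univ, nsmul_eq_mul]
  rw [Nat.card_eq_fintype_card] at hGL ⊢
  rw [mul_div_mul_left _ _ hGL.ne']

theorem sum_ammcKernel {n m t : ℕ} (hn : t ≤ n) (hm : t ≤ m) (X : Matrix (Fin n) (Fin m) F) :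
    ∑ Y, ammcKernel F n m t X Y = 1 := by
  have h := sum_ammcKernel_mul n m t X fun _ => 1
  have hN := rankSet_card_pos (F := F) hn hm
  simpa [hN.ne'] using h

/-- A received matrix of rank `d` shares a `d - t` dimensional part of its row space with the sent
matrix. -/
theorem rank_sub_le_finrank_inf {n m t : ℕ} {X Y : Matrix (Fin n) (Fin m) F}
    (h : ammcKernel F n m t X Y ≠ 0) :
    Y.rank - t ≤ Module.finrank F (rowSpace X ⊓ rowSpace Y : Submodule F (Fin m → F)) := by
  obtain ⟨A, W, hW, rfl⟩ := exists_of_ammcKernel_ne_zero h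
  set Y := (A : Matrix (Fin n) (Fin n) F) * (X + W)
  have h1 := Submodule.finrank_sup_add_finrank_inf_eq (rowSpace X) (rowSpace Y)
  have h2 : rowSpace X ⊔ rowSpace Y ≤ rowSpace X ⊔ rowSpace W :=
    sup_le le_sup_left ((rowSpace_mul_le _ _).trans (rowSpace_add_le _ _))
  have h3 := Submodule.finrank_mono h2
  have h4 := Submodule.finrank_add_le_finrank_add_finrank (rowSpace X) (rowSpace W)
  rw [finrank_rowSpace, finrank_rowSpace] at h1 h4
  omega

theorem rank_le_add_of_ammcKernel_ne_zero {n m t : ℕ} {X Y : Matrix (Fin n) (Fin m) F}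
    (h : ammcKernel F n m t X Y ≠ 0) : Y.rank ≤ X.rank + t := by
  have h1 := rank_sub_le_finrank_inf h
  have h2 := Submodule.finrank_mono (inf_le_left : rowSpace X ⊓ rowSpace Y ≤ rowSpace X)
  rw [finrank_rowSpace] at h2
  omega

end Channel

theorem pow_div_four_le_frameCard_ratio {q : ℝ} (hq : 2 ≤ q) {m k t d : ℕ} (hkt : k + t ≤ m)
    (hd : d ≤ k + t) :
    q ^ ((m - k - t) * (d - t)) / 4 ≤ frameCard q (d - t) (d - t) *
      (frameCard q m (d - t) / (frameCard q k (d - t) * frameCard q d (d - t))) := by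
  have hq1 : 1 < q := by linarith
  rcases Nat.eq_zero_or_pos (d - t) with h0 | h0
  · rw [h0]
    norm_num [frameCard]
  set b := d - t with hb
  have hdb : d = b + t := by omega
  have h1 := pow_mul_frameCard_le hq1 (a := d) (b := b) (c := m - d) (by omega)
  rw [show d + (m - d) = m by omega] at h1
  have h2 := pow_le_four_mul_frameCard_self hq b
  have h3 := frameCard_le_pow hq1 (a := k) (b := b) (by omega)
  have p1 := frameCard_pos hq1 (a := d) (b := b) (by omega)
  have p2 := frameCard_pos hq1 (a := k) (b := b) (by omega)
  have p3 := frameCard_pos hq1 (a := b) (b := b) le_rfl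
  have hexp : q ^ ((m - k - t) * b) * q ^ (k * b) = q ^ (b * b) * q ^ ((m - d) * b) := by
    rw [← pow_add, ← pow_add, ← add_mul, ← add_mul]
    congr 2
    omega
  rw [mul_div_assoc', div_le_div_iff₀ (by norm_num) (by positivity)]
  calc q ^ ((m - k - t) * b) * (frameCard q k b * frameCard q d b)
      ≤ q ^ ((m - k - t) * b) * (q ^ (k * b) * frameCard q d b) := by gcongr
    _ = q ^ (b * b) * (q ^ ((m - d) * b) * frameCard q d b) := by
        rw [← mul_assoc, hexp, mul_assoc]
    _ ≤ (4 * frameCard q b b) * frameCard q m b :=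
        mul_le_mul h2 h1 (by positivity) (by positivity)
    _ = frameCard q b b * frameCard q m b * 4 := by ring

theorem rate_le_rate_sub_loss {q D k y P e : ℝ} {j : ℕ} (hq : 2 ≤ q) (hD : 1 ≤ D) (hk : 1 ≤ k)
    (hy0 : 0 ≤ y) (hy1 : y ≤ 1) (hP : 4 * D ≤ P)
    (he : e ≤ (1 + 1 / q) / (q ^ j * (q - 1))) :
    D * (k - y) - P / q ^ (1 + j + y) ≤ (D + j) * (k - e) := by
  have hq0 : 0 < q := by linarith
  have hqj : 1 ≤ q ^ j := one_le_pow₀ (by linarith)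
  have he3 : e ≤ 3 * (1 / (q * q ^ j)) := by
    refine he.trans ?_
    rw [mul_one_div, div_le_div_iff₀ (by nlinarith) (by positivity)]
    have : (1 + 1 / q) * (q * q ^ j) = (q + 1) * q ^ j := by field_simp
    rw [this]
    nlinarith
  set s := 1 / (q * q ^ j) with hs
  have hs0 : 0 < s := by positivity
  have hsq : s * q ≤ 1 := by
    have : s * q = 1 / q ^ j := by rw [hs]; field_simp
    rw [this]
    exact (div_le_one (by positivity)).2 hqj
  have h1 : (j : ℝ) * e ≤ j * k := by
    rcases Nat.eq_zero_or_pos j with h | h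
    · simp [h]
    · have h2 : q ≤ q ^ j := le_self_pow₀ (by linarith) h.ne'
      have h3 : s ≤ 1 / 4 := by
        rw [hs]
        gcongr
        nlinarith
      have : e ≤ k := by linarith
      gcongr
  set w := 1 + (q - 1) * y with hw
  have hw1 : 1 ≤ w := by nlinarith
  have hbern : q ^ y ≤ w := by
    have h := rpow_one_add_le_one_add_mul_self (s := q - 1) (by linarith) hy0 hy1
    rw [show 1 + (q - 1) = q by ring] at h
    linarith
  have hpow : q ^ (1 + j + y) = q * q ^ j * q ^ y := by
    rw [Real.rpow_add hq0, Real.rpow_add hq0, Real.rpow_one, Real.rpow_natCast]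
  have hqy : 0 < q ^ y := by positivity
  have h4 : D * (4 * (s / w)) ≤ P / q ^ (1 + j + y) := by
    have : P / q ^ (1 + j + y) = P * (s / q ^ y) := by rw [hpow, hs]; field_simp
    rw [this, ← mul_assoc, mul_comm D 4]
    gcongr
    linarith
  have h5 : 3 * s ≤ y + 4 * (s / w) := by
    have h6 : 4 ≤ w + 4 / w := by
      have : w + 4 / w - 4 = (w - 2) ^ 2 / w := by field_simp; ring
      have : 0 ≤ (w - 2) ^ 2 / w := by positivity
      linarith
    have h7 : s * (w - 1) ≤ y := by
      have : s * (w - 1) = s * q * y - s * y := by rw [hw]; ring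
      nlinarith [mul_nonneg hs0.le hy0, mul_le_mul_of_nonneg_right hsq hy0]
    have h8 : 4 * (s / w) = s * (4 / w) := by ring
    rw [h8]
    nlinarith
  have h9 : D * e ≤ D * y + D * (4 * (s / w)) := by
    rw [← mul_add]
    gcongr
    linarith
  linarith

section Rate

variable {F : Type} [Field F] [Fintype F]

/-- The uniform distribution on the `n × m` matrices of rank `k`. -/
noncomputable def uniformRank (F : Type) [Field F] [Fintype F] (n m k : ℕ)
    (X : Matrix (Fin n) (Fin m) F) : ℝ :=
  if X.rank = k then 1 / (Nat.card {M : Matrix (Fin n) (Fin m) F // M.rank = k} : ℝ) else 0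

theorem uniformRank_nonneg (n m k : ℕ) (X : Matrix (Fin n) (Fin m) F) :
    0 ≤ uniformRank F n m k X := by
  unfold uniformRank
  positivity

theorem sum_uniformRank_mul (n m k : ℕ) (f : Matrix (Fin n) (Fin m) F → ℝ) :
    ∑ X, uniformRank F n m k X * f X =
      (∑ X ∈ rankSet F n m k, f X) / (rankSet F n m k).card := by
  classical
  simp only [uniformRank, ite_mul, zero_mul, natCard_rank_eq, ← Finset.sum_filter,
    ← Finset.mul_sum, rankSet]
  ring

theorem sum_uniformRank {n m k : ℕ} (hn : k ≤ n) (hm : k ≤ m) :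
    ∑ X, uniformRank F n m k X = 1 := by
  have h := sum_uniformRank_mul n m k fun _ : Matrix (Fin n) (Fin m) F => 1
  have hN := rankSet_card_pos (F := F) hn hm
  simpa [hN.ne'] using h

theorem uniformRank_ne_zero {n m k : ℕ} {X : Matrix (Fin n) (Fin m) F}
    (h : uniformRank F n m k X ≠ 0) : X.rank = k := by
  by_contra hX
  simp [uniformRank, hX] at h

/-- The ratio of the number of linearly independent tuples common to the row spaces of `X` and `Y`
to its average over the matrices `X` of rank `k`. -/
noncomputable def frameRatio {n m : ℕ} (k t : ℕ) (X Y : Matrix (Fin n) (Fin m) F) : ℝ :=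
  if Y.rank ≤ k + t then
    (frames (rowSpace X ⊓ rowSpace Y) (Y.rank - t)).card *
      (frameCard (Fintype.card F) m (Y.rank - t) /
        (frameCard (Fintype.card F) k (Y.rank - t) *
          frameCard (Fintype.card F) Y.rank (Y.rank - t)))
  else 0

theorem two_le_card (F : Type) [Field F] [Fintype F] : (2 : ℝ) ≤ Fintype.card F := by
  exact_mod_cast Fintype.one_lt_card (α := F)

theorem frameRatio_nonneg {n m k t : ℕ} (hkm : k ≤ m) (X Y : Matrix (Fin n) (Fin m) F) :
    0 ≤ frameRatio k t X Y := by
  have hq : (1 : ℝ) < Fintype.card F := by linarith [two_le_card F]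
  unfold frameRatio
  split_ifs with h
  · have p1 := frameCard_pos hq (a := m) (b := Y.rank - t) (by omega)
    have p2 := frameCard_pos hq (a := k) (b := Y.rank - t) (by omega)
    have p3 := frameCard_pos hq (a := Y.rank) (b := Y.rank - t) (by omega)
    positivity
  · exact le_rfl

theorem sum_uniformRank_mul_frameRatio_le {n m k t : ℕ} (hkn : k ≤ n) (hkm : k ≤ m)
    (Y : Matrix (Fin n) (Fin m) F) :
    ∑ X, uniformRank F n m k X * frameRatio k t X Y ≤ 1 := by
  have hq : (1 : ℝ) < Fintype.card F := by linarith [two_le_card F]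
  unfold frameRatio
  split_ifs with h
  · have p1 := frameCard_pos hq (a := m) (b := Y.rank - t) (by omega)
    have p2 := frameCard_pos hq (a := k) (b := Y.rank - t) (by omega)
    have p3 := frameCard_pos hq (a := Y.rank) (b := Y.rank - t) (by omega)
    have hN : (0 : ℝ) < (rankSet F n m k).card := by exact_mod_cast rankSet_card_pos hkn hkm
    have hs := sum_card_frames (F := F) (n := n) (b := Y.rank - t) (by omega) hkm (rowSpace Y)
      (by rw [finrank_rowSpace]; omega)
    rw [finrank_rowSpace] at hs
    rw [sum_uniformRank_mul, ← Finset.sum_mul, mul_div_assoc', hs, div_div, div_le_one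
      (by positivity)]
    exact le_of_eq (by ring)
  · simp

theorem pow_div_four_le_frameRatio {n m k t : ℕ} (hkt : k + t ≤ m)
    {X Y : Matrix (Fin n) (Fin m) F} (hX : X.rank = k) (h : ammcKernel F n m t X Y ≠ 0) :
    (Fintype.card F : ℝ) ^ ((m - k - t) * (Y.rank - t)) / 4 ≤ frameRatio k t X Y := by
  have hq : (1 : ℝ) < Fintype.card F := by linarith [two_le_card F]
  have hd := rank_le_add_of_ammcKernel_ne_zero h
  rw [hX] at hd
  rw [frameRatio, if_pos hd]
  refine (pow_div_four_le_frameCard_ratio (two_le_card F) hkt hd).trans ?_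
  have p1 := frameCard_pos hq (a := m) (b := Y.rank - t) (by omega)
  have p2 := frameCard_pos hq (a := k) (b := Y.rank - t) (by omega)
  have p3 := frameCard_pos hq (a := Y.rank) (b := Y.rank - t) (by omega)
  have hle := rank_sub_le_finrank_inf h
  have : frameCard (Fintype.card F) (Y.rank - t) (Y.rank - t) ≤
      ((frames (rowSpace X ⊓ rowSpace Y) (Y.rank - t)).card : ℝ) := by
    rw [card_frames hle]
    refine Finset.prod_le_prod (fun i hi => sub_nonneg.2 (pow_le_pow_right₀ hq.le
      (Finset.mem_range.1 hi).le)) fun i _ => ?_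
    gcongr
    exact hq.le
  gcongr

theorem sum_mul_rank_sub_le_mutualInfoB {n m k t : ℕ} (hkn : k ≤ n) (htn : t ≤ n)
    (hkt : k + t ≤ m) :
    ((m - k - t : ℕ) : ℝ) * (∑ X, uniformRank F n m k X *
      ∑ Y, ammcKernel F n m t X Y * ((Y.rank - t : ℕ) : ℝ)) - Real.logb (Fintype.card F) 4 ≤
    mutualInfoB (Fintype.card F) (uniformRank F n m k) (ammcKernel F n m t) := by
  have hq : (1 : ℝ) < Fintype.card F := by linarith [two_le_card F]
  have hq0 : (0 : ℝ) < Fintype.card F := by linarith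
  have h4 : ∀ X Y : Matrix (Fin n) (Fin m) F, uniformRank F n m k X ≠ 0 →
      ammcKernel F n m t X Y ≠ 0 → 0 < frameRatio k t X Y := fun X Y hX hY =>
    lt_of_lt_of_le (by positivity) (pow_div_four_le_frameRatio hkt (uniformRank_ne_zero hX) hY)
  refine le_trans ?_ (mutualInfoB_ge_of_sum_le_one hq (uniformRank_nonneg n m k)
    (sum_uniformRank hkn (by omega)) (ammcKernel_nonneg n m t)
    (fun X _ => sum_ammcKernel htn (by omega) X)
    (sum_uniformRank_mul_frameRatio_le (t := t) hkn (by omega)) h4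
    (frameRatio_nonneg (by omega)))
  have hsplit : ((m - k - t : ℕ) : ℝ) * (∑ X, uniformRank F n m k X *
      ∑ Y, ammcKernel F n m t X Y * ((Y.rank - t : ℕ) : ℝ)) - Real.logb (Fintype.card F) 4 =
      ∑ X, ∑ Y, uniformRank F n m k X * ammcKernel F n m t X Y *
        (((m - k - t : ℕ) : ℝ) * ((Y.rank - t : ℕ) : ℝ) - Real.logb (Fintype.card F) 4) := by
    have h1 : ∑ X, ∑ Y, uniformRank F n m k X * ammcKernel F n m t X Y = 1 := by
      simp only [← Finset.mul_sum, sum_ammcKernel htn (show t ≤ m by omega), mul_one]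
      exact sum_uniformRank hkn (by omega)
    simp only [mul_sub, Finset.sum_sub_distrib, ← Finset.sum_mul, h1, one_mul, Finset.mul_sum]
    congr 1
    exact Finset.sum_congr rfl fun X _ => Finset.sum_congr rfl fun Y _ => by ring
  rw [hsplit]
  refine Finset.sum_le_sum fun X _ => Finset.sum_le_sum fun Y _ => ?_
  by_cases hX : uniformRank F n m k X = 0
  · simp [hX]
  by_cases hY : ammcKernel F n m t X Y = 0
  · simp [hY]
  refine mul_le_mul_of_nonneg_left ?_
    (mul_nonneg (uniformRank_nonneg n m k X) (ammcKernel_nonneg n m t X Y))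
  have h := Real.logb_le_logb_of_le hq (by positivity)
    (pow_div_four_le_frameRatio hkt (uniformRank_ne_zero hX) hY)
  rw [Real.logb_div (by positivity) (by norm_num), Real.logb_pow, Real.logb_self_eq_one hq,
    mul_one, Nat.cast_mul] at h
  exact h

theorem sub_le_sum_ammcKernel_mul_rank_sub {n m k t : ℕ} (ht : 0 < t) (hnm : n ≤ m)
    (hkt : k + t ≤ n) {X : Matrix (Fin n) (Fin m) F} (hX : X.rank = k) :
    (k : ℝ) - (1 + (Fintype.card F : ℝ) ^ n / (Fintype.card F : ℝ) ^ m) /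
        ((Fintype.card F : ℝ) ^ (n - k - t) * ((Fintype.card F : ℝ) - 1)) ≤
      ∑ Y, ammcKernel F n m t X Y * ((Y.rank - t : ℕ) : ℝ) := by
  have hq2 := two_le_card F
  rw [sum_ammcKernel_mul n m t X fun d => ((d - t : ℕ) : ℝ)]
  have hsum := sum_pow_corank_add_le (F := F) (by omega) hnm (by omega) (show t ≤ n by omega) hX
  have hN : (0 : ℝ) < (rankSet F n m t).card := by
    exact_mod_cast rankSet_card_pos (show t ≤ n by omega) (show t ≤ m by omega)
  set q : ℝ := (Fintype.card F : ℝ) with hq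
  have hq0 : 0 < q := by linarith
  have hexp : q ^ (n - k) * q ^ (n - t) / q ^ n = q ^ (n - k - t) := by
    rw [div_eq_iff (by positivity), ← pow_add, ← pow_add]
    congr 1
    omega
  rw [hexp] at hsum
  set Z := q ^ (n - k - t) with hZ
  have hZ0 : 0 < Z := by positivity
  have hpt : ∀ W ∈ rankSet F n m t, (k : ℝ) - (q ^ (n - (X + W).rank) / Z - 1) / (q - 1) ≤
      (((X + W).rank - t : ℕ) : ℝ) := by
    intro W hW
    have hr : (X + W).rank ≤ k + t := by
      have h1 := Submodule.finrank_mono (rowSpace_add_le X W)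
      have h2 := Submodule.finrank_add_le_finrank_add_finrank (rowSpace X) (rowSpace W)
      rw [finrank_rowSpace, hX, finrank_rowSpace, mem_rankSet.1 hW] at h2
      rw [finrank_rowSpace] at h1
      omega
    have hpow : q ^ (n - (X + W).rank) = q ^ (k + t - (X + W).rank) * Z := by
      rw [hZ, ← pow_add]
      congr 1
      omega
    have hbern := one_add_mul_le_pow (a := q - 1) (by linarith) (k + t - (X + W).rank)
    rw [show 1 + (q - 1) = q by ring] at hbern
    rw [hpow, mul_div_cancel_right₀ _ hZ0.ne']
    have h3 : ((k + t - (X + W).rank : ℕ) : ℝ) ≤ (q ^ (k + t - (X + W).rank) - 1) / (q - 1) := by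
      rw [le_div_iff₀ (by linarith)]
      linarith
    have h4 : (k : ℝ) ≤ ((k + t - (X + W).rank : ℕ) : ℝ) + (((X + W).rank - t : ℕ) : ℝ) := by
      exact_mod_cast (show k ≤ k + t - (X + W).rank + ((X + W).rank - t) by omega)
    linarith
  rw [le_div_iff₀ hN]
  refine le_trans ?_ (Finset.sum_le_sum hpt)
  rw [Finset.sum_sub_distrib, ← Finset.sum_div, Finset.sum_sub_distrib, ← Finset.sum_div,
    Finset.sum_const, Finset.sum_const, nsmul_eq_mul, nsmul_eq_mul, mul_one, sub_mul, mul_comm]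
  gcongr
  rw [← div_div, div_mul_eq_mul_div]
  gcongr
  · linarith
  · rw [sub_le_iff_le_add, div_le_iff₀ hZ0]
    refine hsum.trans (le_of_eq ?_)
    field_simp
    ring

theorem sum_ammcKernel_mul_rank_sub_zero {n m k : ℕ} {X : Matrix (Fin n) (Fin m) F}
    (hX : X.rank = k) : ∑ Y, ammcKernel F n m 0 X Y * ((Y.rank - 0 : ℕ) : ℝ) = k := by
  rw [sum_ammcKernel_mul n m 0 X fun d => ((d - 0 : ℕ) : ℝ)]
  have hN : (0 : ℝ) < (rankSet F n m 0).card := by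
    exact_mod_cast rankSet_card_pos (Nat.zero_le n) (Nat.zero_le m)
  rw [div_eq_iff hN.ne', Finset.sum_congr rfl (g := fun _ => (k : ℝ)), Finset.sum_const,
    nsmul_eq_mul, mul_comm]
  intro W hW
  have hW := mem_rankSet.1 hW
  have : W = 0 := by
    rw [Matrix.rank, Submodule.finrank_eq_zero, LinearMap.range_eq_bot] at hW
    exact (LinearEquiv.map_eq_zero_iff Matrix.toLin').1 hW
  simp [this, hX]

theorem rate_le_mutualInfoB_uniformRank {n m k t : ℕ} (hnm : n ≤ m) (hkt : k + t ≤ n) {y : ℝ}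
    (hy0 : 0 ≤ y) (hy1 : y ≤ 1) :
    ((m : ℝ) - n) * (k - y) - Real.logb (Fintype.card F) 4 -
        2 * t * n * m / (Fintype.card F : ℝ) ^ (1 + ((n - k - t : ℕ) : ℝ) + y) ≤
      mutualInfoB (Fintype.card F) (uniformRank F n m k) (ammcKernel F n m t) := by
  have hq2 := two_le_card F
  have hq0 : (0 : ℝ) < Fintype.card F := by linarith
  refine le_trans ?_ (sum_mul_rank_sub_le_mutualInfoB (F := F) (n := n) (m := m) (k := k) (t := t)
    (by omega) (by omega) (by omega))
  set E := ∑ X, uniformRank F n m k X *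
      ∑ Y, ammcKernel F n m t X Y * ((Y.rank - t : ℕ) : ℝ) with hE
  have hE0 : 0 ≤ E := Finset.sum_nonneg fun X _ => mul_nonneg (uniformRank_nonneg n m k X)
    (Finset.sum_nonneg fun Y _ => mul_nonneg (ammcKernel_nonneg n m t X Y) (Nat.cast_nonneg _))
  have hEc : ∀ c : ℝ, (∀ X : Matrix (Fin n) (Fin m) F, X.rank = k →
      c ≤ ∑ Y, ammcKernel F n m t X Y * ((Y.rank - t : ℕ) : ℝ)) → c ≤ E := by
    intro c hc
    calc c = ∑ X, uniformRank F n m k X * c := by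
          rw [← Finset.sum_mul, sum_uniformRank (by omega) (by omega), one_mul]
      _ ≤ E := Finset.sum_le_sum fun X _ => by
          by_cases hX : uniformRank F n m k X = 0
          · simp [hX]
          · exact mul_le_mul_of_nonneg_left (hc X (uniformRank_ne_zero hX))
              (uniformRank_nonneg n m k X)
  have hcast : ((m - k - t : ℕ) : ℝ) = ((m : ℝ) - n) + ((n - k - t : ℕ) : ℝ) := by
    rw [← Nat.cast_sub hnm]
    exact_mod_cast (show m - k - t = m - n + (n - k - t) by omega)
  rw [hcast]
  set D : ℝ := (m : ℝ) - n with hD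
  have hD0 : 0 ≤ D := sub_nonneg.2 (by exact_mod_cast hnm)
  have hj0 : (0 : ℝ) ≤ ((n - k - t : ℕ) : ℝ) := Nat.cast_nonneg _
  have hloss : 0 ≤ 2 * t * n * m / (Fintype.card F : ℝ) ^ (1 + ((n - k - t : ℕ) : ℝ) + y) := by
    positivity
  have hDE := mul_nonneg (add_nonneg hD0 hj0) hE0
  have hDy := mul_nonneg hD0 hy0
  suffices D * (k - y) - 2 * t * n * m / (Fintype.card F : ℝ) ^ (1 + ((n - k - t : ℕ) : ℝ) + y) ≤
      (D + ((n - k - t : ℕ) : ℝ)) * E by linarith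
  rcases Nat.eq_zero_or_pos k with rfl | hk
  · rw [Nat.cast_zero]
    linarith
  rcases Nat.eq_zero_or_pos t with rfl | ht
  · have hkE := hEc k fun X hX => (sum_ammcKernel_mul_rank_sub_zero hX).ge
    have h1 := mul_le_mul_of_nonneg_left hkE hD0
    have h2 := mul_nonneg hj0 hE0
    linarith
  rcases hnm.eq_or_lt with rfl | hlt
  · have : D = 0 := sub_self _
    rw [this] at hDE ⊢
    linarith
  have hkE := hEc _ fun X hX => sub_le_sum_ammcKernel_mul_rank_sub ht hnm hkt hX
  refine le_trans (rate_le_rate_sub_loss hq2 ?_ ?_ hy0 hy1 ?_ ?_)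
    (mul_le_mul_of_nonneg_left hkE (add_nonneg hD0 hj0))
  · have : (n : ℝ) + 1 ≤ m := by exact_mod_cast hlt
    linarith
  · exact_mod_cast hk
  · have ht1 : (1 : ℝ) ≤ t := by exact_mod_cast ht
    have hn2 : (2 : ℝ) ≤ n := by exact_mod_cast (show 2 ≤ n by omega)
    have hm0 : (0 : ℝ) ≤ m := Nat.cast_nonneg m
    have htn : 2 ≤ (t : ℝ) * n := by nlinarith
    nlinarith [mul_le_mul_of_nonneg_right htn hm0]
  · have : (0 : ℝ) < (Fintype.card F : ℝ) - 1 := by linarith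
    gcongr ?_ / _
    rw [add_le_add_iff_left, div_le_div_iff₀ (by positivity) hq0, one_mul, ← pow_succ]
    exact pow_le_pow_right₀ (by linarith) hlt

end Rate

/-- for `n ≤ m` and any `ε ≥ 0` with `(1+ε)t ≤ n`, the capacity (in `q`-ary
units) of the additive-multiplicative matrix channel is lower bounded by
`C ≥ (m-n)(n - t - εt) - log_q 4 - 2tnm/q^{1+εt}`; this bound is achieved by choosing `X`
uniformly among the `n × m` matrices of rank `n - (1+ε)t`. -/
theorem stmt_17 (F : Type) [Field F] [Fintype F] (n m t : ℕ) (ε : ℝ)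
    (hnm : n ≤ m) (hε : 0 ≤ ε) (hεt : (1 + ε) * t ≤ n) :
    capacityB (Fintype.card F) (ammcKernel F n m t)
      ≥ ((m : ℝ) - n) * ((n : ℝ) - t - ε * t) -
          Real.logb (Fintype.card F) 4 -
          2 * t * n * m / (Fintype.card F : ℝ) ^ (1 + ε * t) ∧
    ∀ k : ℕ, (k : ℝ) = (n : ℝ) - (1 + ε) * t →
      mutualInfoB (Fintype.card F)
          (fun X : Matrix (Fin n) (Fin m) F =>
            if X.rank = k
            then 1 / (Nat.card {M : Matrix (Fin n) (Fin m) F // M.rank = k} : ℝ)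
            else 0)
          (ammcKernel F n m t)
        ≥ ((m : ℝ) - n) * ((n : ℝ) - t - ε * t) -
            Real.logb (Fintype.card F) 4 -
            2 * t * n * m / (Fintype.card F : ℝ) ^ (1 + ε * t) := by
  have hq2 := two_le_card F
  have hq1 : (1 : ℝ) < Fintype.card F := by linarith
  have hε' : 0 ≤ ε * t := by positivity
  constructor
  · have htn : t ≤ n := by
      have : (t : ℝ) ≤ n := by linarith
      exact_mod_cast this
    have hfl : ⌊ε * t⌋₊ ≤ n - t := by
      refine Nat.floor_le_of_le ?_
      rw [Nat.cast_sub htn]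
      linarith
    have h := rate_le_mutualInfoB_uniformRank (F := F) (k := n - t - ⌊ε * t⌋₊) (t := t) hnm
      (by omega) (y := ε * t - ⌊ε * t⌋₊) (sub_nonneg.2 (Nat.floor_le hε'))
      (by linarith [Nat.lt_floor_add_one (ε * t)])
    rw [show n - (n - t - ⌊ε * t⌋₊) - t = ⌊ε * t⌋₊ by omega, Nat.cast_sub hfl, Nat.cast_sub htn,
      show (1 : ℝ) + ⌊ε * t⌋₊ + (ε * t - ⌊ε * t⌋₊) = 1 + ε * t by ring,
      show (n : ℝ) - t - ⌊ε * t⌋₊ - (ε * t - ⌊ε * t⌋₊) = n - t - ε * t by ring] at h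
    exact h.trans (mutualInfoB_le_capacityB hq1 (uniformRank_nonneg _ _ _)
      (sum_uniformRank (by omega) (by omega)) (ammcKernel_nonneg _ _ _))
  · intro k hk
    have hkt : k + t ≤ n := by
      have : (k : ℝ) + t ≤ n := by linarith
      exact_mod_cast this
    have h := rate_le_mutualInfoB_uniformRank (F := F) hnm hkt le_rfl zero_le_one
    have hj : ((n - k - t : ℕ) : ℝ) = ε * t := by
      rw [Nat.sub_sub, Nat.cast_sub hkt, Nat.cast_add]
      linarith
    rw [hj, add_zero, sub_zero, show (k : ℝ) = n - t - ε * t by linarith] at h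
    exact h
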